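/- Let α ∈ ℝ and define L : ℝ⁸ → ℝ on the set where x·p + y·q − u ≠ 0 by L(x,y,u,p,q,r,s,t) = u·(s² − r·t)/(x·p + y·q − u)⁴ − α·u. Let D ⊆ ℝ² be open and let u : ℝ² → ℝ be C⁴ on D with x·u_x + y·u_y − u ≠ 0 throughout D. Write j²u(x,y) = (x, y, u(x,y), u_x(x,y), u_y(x,y), u_xx(x,y), u_xy(x,y), u_yy(x,y)). Then at every point of D one has L_u(j²u) − ∂/∂x[L_p(j²u)] − ∂/∂y[L_q(j²u)] + ∂²/∂x²[L_r(j²u)] + ∂²/∂x∂y[L_s(j²u)] + ∂²/∂y²[L_t(j²u)] = (u_xx·u_yy − u_xy²)/(x·u_x + y·u_y − u)⁴ − α. -/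

import Mathlib

/-- Partial derivative of a function on the jet space `ℝ⁸` (coordinates
`(x, y, u, p, q, r, s, t)` indexed by `0, …, 7`) with respect to the `i`-th variable. -/
noncomputable def jd (i : Fin 8) (L : (Fin 8 → ℝ) → ℝ) (v : Fin 8 → ℝ) : ℝ :=
  deriv (fun a => L (Function.update v i a)) (v i)

/-- The Țițeica Lagrangian `L(x,y,u,p,q,r,s,t) = u·(s² − r·t)/(x·p + y·q − u)⁴ − α·u`,
with jet coordinates `x = v 0`, `y = v 1`, `u = v 2`, `p = v 3`, `q = v 4`,
`r = v 5`, `s = v 6`, `t = v 7`. -/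
noncomputable def titeicaLagrangian (α : ℝ) (v : Fin 8 → ℝ) : ℝ :=
  v 2 * ((v 6) ^ 2 - v 5 * v 7) / (v 0 * v 3 + v 1 * v 4 - v 2) ^ 4 - α * v 2

/-- Partial derivative with respect to the first variable. -/
noncomputable def pdx (u : ℝ × ℝ → ℝ) (p : ℝ × ℝ) : ℝ :=
  deriv (fun x => u (x, p.2)) p.1

/-- Partial derivative with respect to the second variable. -/
noncomputable def pdy (u : ℝ × ℝ → ℝ) (p : ℝ × ℝ) : ℝ :=
  deriv (fun y => u (p.1, y)) p.2

/-- The second-order jet `j²u(x,y) = (x, y, u, u_x, u_y, u_xx, u_xy, u_yy)` of `u`. -/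
noncomputable def jet2 (u : ℝ × ℝ → ℝ) (p : ℝ × ℝ) : Fin 8 → ℝ :=
  ![p.1, p.2, u p, pdx u p, pdy u p, pdx (pdx u) p, pdy (pdx u) p, pdy (pdy u) p]

/-!
Write `w = x u_x + y u_y - u` and `φ = u / w⁴`, so that `L(j²u) = -φ det D²u - α u`.
The cofactor matrix `cof D²u` is divergence free, hence the second-order terms of the Euler–Lagrange
expression collapse to `-div(cof(D²u) ∇φ)`, in which no fourth derivative of `u` survives.
Since `∇w = D²u (x, y)`, one has `cof(D²u) ∇w = det(D²u) (x, y)`, and the product rule gives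
`cof(D²u) ∇φ = w⁻⁴ cof(D²u) ∇u - (L_p, L_q)`. The first-order fluxes therefore cancel, and the whole
expression is `L_u - div(w⁻⁴ cof(D²u) ∇u)`, which involves only second derivatives of `u`.
-/

open Filter Topology

lemma hasDerivAt_inv_pow {g : ℝ → ℝ} {g' a : ℝ} (hg : HasDerivAt g g' a) (h0 : g a ≠ 0) (n : ℕ) :
    HasDerivAt (fun x => (g x ^ n)⁻¹) (-(n / g a ^ (n + 1)) * g') a := by
  have h := ((hasDerivAt_id (g a)).fun_pow n).fun_inv (pow_ne_zero n h0)
  refine (h.comp a hg).congr_deriv ?_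
  rcases n with _ | n
  · simp
  · simp only [id_eq, Nat.add_sub_cancel]
    field_simp
    ring

section PartialDerivatives

variable {f g : ℝ × ℝ → ℝ} {p : ℝ × ℝ} {m n : WithTop ℕ∞}

lemma pdx_congr (h : f =ᶠ[𝓝 p] g) : pdx f p = pdx g p :=
  EventuallyEq.deriv_eq <| ((Continuous.prodMk_left p.2).tendsto p.1).eventually h

lemma pdy_congr (h : f =ᶠ[𝓝 p] g) : pdy f p = pdy g p :=
  EventuallyEq.deriv_eq <| ((Continuous.prodMk_right p.1).tendsto p.2).eventually h

lemma pdx_fst : pdx Prod.fst p = 1 := deriv_id _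

lemma pdx_snd : pdx Prod.snd p = 0 := deriv_const _ _

lemma pdy_fst : pdy Prod.fst p = 0 := deriv_const _ _

lemma pdy_snd : pdy Prod.snd p = 1 := deriv_id _

lemma pdx_add (hf : DifferentiableAt ℝ f p) (hg : DifferentiableAt ℝ g p) :
    pdx (fun q => f q + g q) p = pdx f p + pdx g p :=
  deriv_fun_add (by fun_prop) (by fun_prop)

lemma pdy_add (hf : DifferentiableAt ℝ f p) (hg : DifferentiableAt ℝ g p) :
    pdy (fun q => f q + g q) p = pdy f p + pdy g p :=
  deriv_fun_add (by fun_prop) (by fun_prop)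

lemma pdx_sub (hf : DifferentiableAt ℝ f p) (hg : DifferentiableAt ℝ g p) :
    pdx (fun q => f q - g q) p = pdx f p - pdx g p :=
  deriv_fun_sub (by fun_prop) (by fun_prop)

lemma pdy_sub (hf : DifferentiableAt ℝ f p) (hg : DifferentiableAt ℝ g p) :
    pdy (fun q => f q - g q) p = pdy f p - pdy g p :=
  deriv_fun_sub (by fun_prop) (by fun_prop)

lemma pdx_mul (hf : DifferentiableAt ℝ f p) (hg : DifferentiableAt ℝ g p) :
    pdx (fun q => f q * g q) p = pdx f p * g p + f p * pdx g p :=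
  deriv_fun_mul (c := fun x => f (x, p.2)) (d := fun x => g (x, p.2)) (by fun_prop) (by fun_prop)

lemma pdy_mul (hf : DifferentiableAt ℝ f p) (hg : DifferentiableAt ℝ g p) :
    pdy (fun q => f q * g q) p = pdy f p * g p + f p * pdy g p :=
  deriv_fun_mul (c := fun y => f (p.1, y)) (d := fun y => g (p.1, y)) (by fun_prop) (by fun_prop)

lemma pdx_neg (f : ℝ × ℝ → ℝ) : pdx (fun q => -f q) = fun q => -pdx f q :=
  funext fun _ => deriv.fun_neg

lemma pdy_neg (f : ℝ × ℝ → ℝ) : pdy (fun q => -f q) = fun q => -pdy f q :=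
  funext fun _ => deriv.fun_neg

lemma pdx_const_mul (c : ℝ) (f : ℝ × ℝ → ℝ) : pdx (fun q => c * f q) = fun q => c * pdx f q :=
  funext fun _ => deriv_const_mul_field c

lemma pdy_const_mul (c : ℝ) (f : ℝ × ℝ → ℝ) : pdy (fun q => c * f q) = fun q => c * pdy f q :=
  funext fun _ => deriv_const_mul_field c

lemma pdx_inv_pow (hf : DifferentiableAt ℝ f p) (h0 : f p ≠ 0) (n : ℕ) :
    pdx (fun q => (f q ^ n)⁻¹) p = -(n / f p ^ (n + 1)) * pdx f p :=
  (hasDerivAt_inv_pow (g := fun x => f (x, p.2))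
    (DifferentiableAt.hasDerivAt (by fun_prop)) h0 n).deriv

lemma pdy_inv_pow (hf : DifferentiableAt ℝ f p) (h0 : f p ≠ 0) (n : ℕ) :
    pdy (fun q => (f q ^ n)⁻¹) p = -(n / f p ^ (n + 1)) * pdy f p :=
  (hasDerivAt_inv_pow (g := fun y => f (p.1, y))
    (DifferentiableAt.hasDerivAt (by fun_prop)) h0 n).deriv

lemma pdx_eq_fderiv (hf : DifferentiableAt ℝ f p) : pdx f p = fderiv ℝ f p (1, 0) :=
  (hf.hasFDerivAt.comp_hasDerivAt (f := fun x => (x, p.2)) p.1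
    ((hasDerivAt_id p.1).prodMk (hasDerivAt_const p.1 p.2))).deriv

lemma pdy_eq_fderiv (hf : DifferentiableAt ℝ f p) : pdy f p = fderiv ℝ f p (0, 1) :=
  (hf.hasFDerivAt.comp_hasDerivAt (f := fun y => (p.1, y)) p.2
    ((hasDerivAt_const p.2 p.1).prodMk (hasDerivAt_id p.2))).deriv

lemma eventually_differentiableAt (hf : ContDiffAt ℝ n f p) (hn : 1 ≤ n) :
    ∀ᶠ q in 𝓝 p, DifferentiableAt ℝ f q :=
  ((hf.of_le hn).eventually (by simp)).mono fun _ hq => hq.differentiableAt one_ne_zero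

lemma contDiffAt_pdx (hf : ContDiffAt ℝ n f p) (hmn : m + 1 ≤ n) : ContDiffAt ℝ m (pdx f) p :=
  ((hf.fderiv_right hmn).clm_apply contDiffAt_const).congr_of_eventuallyEq
    ((eventually_differentiableAt hf (le_add_self.trans hmn)).mono fun _ => pdx_eq_fderiv)

lemma contDiffAt_pdy (hf : ContDiffAt ℝ n f p) (hmn : m + 1 ≤ n) : ContDiffAt ℝ m (pdy f) p :=
  ((hf.fderiv_right hmn).clm_apply contDiffAt_const).congr_of_eventuallyEq
    ((eventually_differentiableAt hf (le_add_self.trans hmn)).mono fun _ => pdy_eq_fderiv)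

lemma differentiableAt_pdx (hf : ContDiffAt ℝ 2 f p) : DifferentiableAt ℝ (pdx f) p :=
  (contDiffAt_pdx (m := 1) hf (by norm_num)).differentiableAt one_ne_zero

lemma differentiableAt_pdy (hf : ContDiffAt ℝ 2 f p) : DifferentiableAt ℝ (pdy f) p :=
  (contDiffAt_pdy (m := 1) hf (by norm_num)).differentiableAt one_ne_zero

lemma pdx_pdy_comm (hf : ContDiffAt ℝ 2 f p) : pdx (pdy f) p = pdy (pdx f) p := by
  have hf' : DifferentiableAt ℝ (fderiv ℝ f) p :=
    (hf.fderiv_right (m := 1) (by norm_num)).differentiableAt one_ne_zero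
  have hd := eventually_differentiableAt hf one_le_two
  calc pdx (pdy f) p
      = pdx (fun q => fderiv ℝ f q (0, 1)) p := pdx_congr (hd.mono fun _ => pdy_eq_fderiv)
    _ = fderiv ℝ (fderiv ℝ f) p (1, 0) (0, 1) := by
        rw [pdx_eq_fderiv (by fun_prop), fderiv_clm_apply hf' (by fun_prop)]; simp
    _ = fderiv ℝ (fderiv ℝ f) p (0, 1) (1, 0) := hf.isSymmSndFDerivAt (by simp) _ _
    _ = pdy (fun q => fderiv ℝ f q (1, 0)) p := by
        rw [pdy_eq_fderiv (by fun_prop), fderiv_clm_apply hf' (by fun_prop)]; simp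
    _ = pdy (pdx f) p := (pdy_congr (hd.mono fun _ => pdx_eq_fderiv)).symm

lemma pdx_pdy_pdy (hf : ContDiffAt ℝ 3 f p) : pdx (pdy (pdy f)) p = pdy (pdy (pdx f)) p :=
  calc pdx (pdy (pdy f)) p
      = pdy (pdx (pdy f)) p := pdx_pdy_comm (contDiffAt_pdy hf (by norm_num))
    _ = pdy (pdy (pdx f)) p := pdy_congr <|
        ((hf.of_le (by norm_num)).eventually (by simp)).mono fun _ => pdx_pdy_comm

end PartialDerivatives

section Divergence

variable {F G : ℝ × ℝ → ℝ × ℝ} {g : ℝ × ℝ → ℝ} {p : ℝ × ℝ}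

/-- The divergence of a plane vector field. -/
noncomputable def divergence (F : ℝ × ℝ → ℝ × ℝ) (p : ℝ × ℝ) : ℝ :=
  pdx (fun q => (F q).1) p + pdy (fun q => (F q).2) p

lemma divergence_congr (h : F =ᶠ[𝓝 p] G) : divergence F p = divergence G p :=
  congrArg₂ (· + ·) (pdx_congr (h.mono fun _ => congrArg Prod.fst))
    (pdy_congr (h.mono fun _ => congrArg Prod.snd))

lemma divergence_sub (hF : DifferentiableAt ℝ F p) (hG : DifferentiableAt ℝ G p) :
    divergence (fun q => F q - G q) p = divergence F p - divergence G p := by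
  simp only [divergence, Prod.fst_sub, Prod.snd_sub]
  rw [pdx_sub (by fun_prop) (by fun_prop), pdy_sub (by fun_prop) (by fun_prop)]
  ring

lemma divergence_smul (hg : DifferentiableAt ℝ g p) (hF : DifferentiableAt ℝ F p) :
    divergence (fun q => g q • F q) p
      = g p * divergence F p + (pdx g p * (F p).1 + pdy g p * (F p).2) := by
  simp only [divergence, Prod.smul_fst, Prod.smul_snd, smul_eq_mul]
  rw [pdx_mul hg (by fun_prop), pdy_mul hg (by fun_prop)]
  ring

end Divergence

section Hessian

variable {u f g : ℝ × ℝ → ℝ} {p : ℝ × ℝ}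

/-- The determinant `u_xx u_yy - u_xy²` of the Hessian of `u`. -/
noncomputable def hessianDet (u : ℝ × ℝ → ℝ) (p : ℝ × ℝ) : ℝ :=
  pdx (pdx u) p * pdy (pdy u) p - pdy (pdx u) p ^ 2

/-- The vector field `cof(D²u) ∇f`, where `cof(D²u)` is the cofactor matrix of the Hessian
of `u`. -/
noncomputable def hessCofGrad (u f : ℝ × ℝ → ℝ) (p : ℝ × ℝ) : ℝ × ℝ :=
  (pdx f p * pdy (pdy u) p - pdy f p * pdy (pdx u) p,
    pdy f p * pdx (pdx u) p - pdx f p * pdy (pdx u) p)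

lemma differentiableAt_hessCofGrad (hu : ContDiffAt ℝ 3 u p) (hf : ContDiffAt ℝ 2 f p) :
    DifferentiableAt ℝ (hessCofGrad u f) p := by
  have hux : ContDiffAt ℝ 2 (pdx u) p := contDiffAt_pdx hu (by norm_num)
  have huy : ContDiffAt ℝ 2 (pdy u) p := contDiffAt_pdy hu (by norm_num)
  have dfx := differentiableAt_pdx hf
  have dfy := differentiableAt_pdy hf
  have duxx := differentiableAt_pdx hux
  have duxy := differentiableAt_pdy hux
  have duyy := differentiableAt_pdy huy
  unfold hessCofGrad
  fun_prop

lemma hessCofGrad_mul (hf : DifferentiableAt ℝ f p) (hg : DifferentiableAt ℝ g p) :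
    hessCofGrad u (fun q => f q * g q) p = f p • hessCofGrad u g p + g p • hessCofGrad u f p := by
  ext <;> simp only [hessCofGrad, pdx_mul hf hg, pdy_mul hf hg, Prod.fst_add, Prod.snd_add,
    Prod.smul_fst, Prod.smul_snd, smul_eq_mul] <;> ring

lemma hessCofGrad_inv_pow (hf : DifferentiableAt ℝ f p) (h0 : f p ≠ 0) (n : ℕ) :
    hessCofGrad u (fun q => (f q ^ n)⁻¹) p = -(n / f p ^ (n + 1)) • hessCofGrad u f p := by
  ext <;> simp only [hessCofGrad, pdx_inv_pow hf h0, pdy_inv_pow hf h0,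
    Prod.smul_fst, Prod.smul_snd, smul_eq_mul] <;> ring

-- This and the next lemma say that the rows of `cof(D²u)` are divergence free (Piola identity).
lemma pdx_mul_sub_pdy_mul_eq_hessCofGrad_fst (hu : ContDiffAt ℝ 3 u p)
    (hf : DifferentiableAt ℝ f p) :
    pdx (fun q => f q * pdy (pdy u) q) p - pdy (fun q => f q * pdy (pdx u) q) p
      = (hessCofGrad u f p).1 := by
  rw [pdx_mul hf (differentiableAt_pdy (contDiffAt_pdy hu (by norm_num))),
    pdy_mul hf (differentiableAt_pdy (contDiffAt_pdx hu (by norm_num))),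
    pdx_pdy_pdy hu, hessCofGrad]
  ring

lemma pdy_mul_sub_pdx_mul_eq_hessCofGrad_snd (hu : ContDiffAt ℝ 3 u p)
    (hf : DifferentiableAt ℝ f p) :
    pdy (fun q => f q * pdx (pdx u) q) p - pdx (fun q => f q * pdy (pdx u) q) p
      = (hessCofGrad u f p).2 := by
  have hux : ContDiffAt ℝ 2 (pdx u) p := contDiffAt_pdx hu (by norm_num)
  rw [pdy_mul hf (differentiableAt_pdx hux), pdx_mul hf (differentiableAt_pdy hux),
    pdx_pdy_comm hux, hessCofGrad]
  ring

lemma divergence_hessCofGrad (hu : ContDiffAt ℝ 3 u p) (hf : ContDiffAt ℝ 2 f p) :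
    divergence (hessCofGrad u f) p
      = (hessCofGrad u (pdx f) p).1 + (hessCofGrad u (pdy f) p).2 := by
  have hux : ContDiffAt ℝ 2 (pdx u) p := contDiffAt_pdx hu (by norm_num)
  have huy : ContDiffAt ℝ 2 (pdy u) p := contDiffAt_pdy hu (by norm_num)
  have dfx := differentiableAt_pdx hf
  have dfy := differentiableAt_pdy hf
  have duxx := differentiableAt_pdx hux
  have duxy := differentiableAt_pdy hux
  have duyy := differentiableAt_pdy huy
  rw [← pdx_mul_sub_pdy_mul_eq_hessCofGrad_fst hu dfx,
    ← pdy_mul_sub_pdx_mul_eq_hessCofGrad_snd hu dfy]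
  simp only [divergence, hessCofGrad]
  rw [pdx_sub (by fun_prop) (by fun_prop), pdy_sub (by fun_prop) (by fun_prop)]
  ring

lemma divergence_hessCofGrad_self (hu : ContDiffAt ℝ 3 u p) :
    divergence (hessCofGrad u u) p = 2 * hessianDet u p := by
  have hu₂ : ContDiffAt ℝ 2 u p := hu.of_le (by norm_num)
  simp only [divergence_hessCofGrad hu hu₂, hessCofGrad, hessianDet, pdx_pdy_comm hu₂]
  ring

lemma pdx_pdx_sub_two_mul_pdx_pdy_add_pdy_pdy (hu : ContDiffAt ℝ 4 u p)
    (hf : ContDiffAt ℝ 2 f p) :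
    pdx (pdx fun q => f q * pdy (pdy u) q) p - 2 * pdx (pdy fun q => f q * pdy (pdx u) q) p
        + pdy (pdy fun q => f q * pdx (pdx u) q) p
      = divergence (hessCofGrad u f) p := by
  have hux : ContDiffAt ℝ 3 (pdx u) p := contDiffAt_pdx hu (by norm_num)
  have huy : ContDiffAt ℝ 3 (pdy u) p := contDiffAt_pdy hu (by norm_num)
  have hxx := hf.mul (contDiffAt_pdx hux (by norm_num))
  have hxy := hf.mul (contDiffAt_pdy hux (by norm_num))
  have hyy := hf.mul (contDiffAt_pdy huy (by norm_num))
  have hu₃ : ∀ᶠ q in 𝓝 p, ContDiffAt ℝ 3 u q := (hu.of_le (by norm_num)).eventually (by simp)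
  have hreg := hu₃.and (eventually_differentiableAt hf one_le_two)
  have h_fst : pdx (fun q => (hessCofGrad u f q).1) p
      = pdx (pdx fun q => f q * pdy (pdy u) q) p - pdx (pdy fun q => f q * pdy (pdx u) q) p := by
    rw [← pdx_sub (differentiableAt_pdx hyy) (differentiableAt_pdy hxy)]
    exact pdx_congr <| hreg.mono fun q hq =>
      (pdx_mul_sub_pdy_mul_eq_hessCofGrad_fst hq.1 hq.2).symm
  have h_snd : pdy (fun q => (hessCofGrad u f q).2) p
      = pdy (pdy fun q => f q * pdx (pdx u) q) p - pdy (pdx fun q => f q * pdy (pdx u) q) p := by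
    rw [← pdy_sub (differentiableAt_pdy hxx) (differentiableAt_pdx hxy)]
    exact pdy_congr <| hreg.mono fun q hq =>
      (pdy_mul_sub_pdx_mul_eq_hessCofGrad_snd hq.1 hq.2).symm
  rw [divergence, h_fst, h_snd, ← pdx_pdy_comm hxy]
  ring

end Hessian

section LegendreTransform

variable {u : ℝ × ℝ → ℝ} {p : ℝ × ℝ} {m n : WithTop ℕ∞}

/-- The Legendre transform `x u_x + y u_y - u` of `u`, as a function of the base point `(x, y)`. -/
noncomputable def legendreTransform (u : ℝ × ℝ → ℝ) (p : ℝ × ℝ) : ℝ :=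
  p.1 * pdx u p + p.2 * pdy u p - u p

lemma contDiffAt_legendreTransform (hu : ContDiffAt ℝ n u p) (hmn : m + 1 ≤ n) :
    ContDiffAt ℝ m (legendreTransform u) p :=
  ((contDiffAt_fst.mul (contDiffAt_pdx hu hmn)).add
    (contDiffAt_snd.mul (contDiffAt_pdy hu hmn))).sub (hu.of_le (le_self_add.trans hmn))

lemma contDiffAt_inv_pow_legendreTransform (hu : ContDiffAt ℝ n u p) (hmn : m + 1 ≤ n)
    (hw : legendreTransform u p ≠ 0) (k : ℕ) :
    ContDiffAt ℝ m (fun q => (legendreTransform u q ^ k)⁻¹) p :=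
  ((contDiffAt_legendreTransform hu hmn).pow k).inv (pow_ne_zero k hw)

lemma differentiableAt_legendreTransform (hu : ContDiffAt ℝ 2 u p) :
    DifferentiableAt ℝ (legendreTransform u) p :=
  (contDiffAt_legendreTransform (m := 1) hu (by norm_num)).differentiableAt one_ne_zero

lemma differentiableAt_inv_pow_legendreTransform (hu : ContDiffAt ℝ 2 u p)
    (hw : legendreTransform u p ≠ 0) (k : ℕ) :
    DifferentiableAt ℝ (fun q => (legendreTransform u q ^ k)⁻¹) p :=
  (contDiffAt_inv_pow_legendreTransform (m := 1) hu (by norm_num) hw k).differentiableAt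
    one_ne_zero

lemma pdx_legendreTransform (hu : ContDiffAt ℝ 2 u p) :
    pdx (legendreTransform u) p = p.1 * pdx (pdx u) p + p.2 * pdy (pdx u) p := by
  have d := hu.differentiableAt two_ne_zero
  have dx := differentiableAt_pdx hu
  have dy := differentiableAt_pdy hu
  unfold legendreTransform
  rw [pdx_sub (by fun_prop) d, pdx_add (by fun_prop) (by fun_prop), pdx_mul (by fun_prop) dx,
    pdx_mul (by fun_prop) dy, pdx_pdy_comm hu, pdx_fst, pdx_snd]
  ring

lemma pdy_legendreTransform (hu : ContDiffAt ℝ 2 u p) :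
    pdy (legendreTransform u) p = p.1 * pdy (pdx u) p + p.2 * pdy (pdy u) p := by
  have d := hu.differentiableAt two_ne_zero
  have dx := differentiableAt_pdx hu
  have dy := differentiableAt_pdy hu
  unfold legendreTransform
  rw [pdy_sub (by fun_prop) d, pdy_add (by fun_prop) (by fun_prop), pdy_mul (by fun_prop) dx,
    pdy_mul (by fun_prop) dy, pdy_fst, pdy_snd]
  ring

lemma hessCofGrad_legendreTransform (hu : ContDiffAt ℝ 2 u p) :
    hessCofGrad u (legendreTransform u) p = hessianDet u p • p := by
  ext <;> simp only [hessCofGrad, hessianDet, pdx_legendreTransform hu, pdy_legendreTransform hu,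
    Prod.smul_fst, Prod.smul_snd, smul_eq_mul] <;> ring

lemma divergence_inv_pow_legendreTransform_smul (hu : ContDiffAt ℝ 3 u p)
    (hw : legendreTransform u p ≠ 0) (n : ℕ) :
    divergence (fun q => (legendreTransform u q ^ n)⁻¹ • hessCofGrad u u q) p
      = hessianDet u p * ((2 - n) / legendreTransform u p ^ n
          - n * u p / legendreTransform u p ^ (n + 1)) := by
  have hu₂ : ContDiffAt ℝ 2 u p := hu.of_le (by norm_num)
  have dw := differentiableAt_legendreTransform hu₂
  have hadj : pdx (legendreTransform u) p * (hessCofGrad u u p).1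
      + pdy (legendreTransform u) p * (hessCofGrad u u p).2
      = hessianDet u p * (legendreTransform u p + u p) := by
    rw [pdx_legendreTransform hu₂, pdy_legendreTransform hu₂, hessCofGrad, hessianDet,
      legendreTransform]
    ring
  have hpow : legendreTransform u p / legendreTransform u p ^ (n + 1)
      = 1 / legendreTransform u p ^ n := by
    rw [pow_succ']
    field_simp
  rw [divergence_smul (differentiableAt_inv_pow_legendreTransform hu₂ hw n)
      (differentiableAt_hessCofGrad hu hu₂),
    divergence_hessCofGrad_self hu, pdx_inv_pow dw hw, pdy_inv_pow dw hw]
  linear_combination -(n / legendreTransform u p ^ (n + 1)) * hadj - n * hessianDet u p * hpow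

end LegendreTransform

section TiteicaLagrangian

lemma jd_eq_of_hasDerivAt {i : Fin 8} {L : (Fin 8 → ℝ) → ℝ} {v : Fin 8 → ℝ} {g : ℝ → ℝ} {c : ℝ}
    (hg : HasDerivAt g c (v i)) (hL : ∀ a, L (Function.update v i a) = g a) : jd i L v = c := by
  rw [jd, funext hL, hg.deriv]

variable (α : ℝ) (v : Fin 8 → ℝ)

lemma jd_two_titeicaLagrangian (hv : v 0 * v 3 + v 1 * v 4 - v 2 ≠ 0) :
    jd 2 (titeicaLagrangian α) v
      = -((v 5 * v 7 - v 6 ^ 2) * (1 / (v 0 * v 3 + v 1 * v 4 - v 2) ^ 4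
        + 4 * v 2 / (v 0 * v 3 + v 1 * v 4 - v 2) ^ 5)) - α := by
  have hw := hasDerivAt_inv_pow ((hasDerivAt_id' (v 2)).const_sub (v 0 * v 3 + v 1 * v 4)) hv 4
  have hL := (((hasDerivAt_id' (v 2)).mul_const (v 6 ^ 2 - v 5 * v 7)).fun_mul hw).fun_sub
    ((hasDerivAt_id' (v 2)).const_mul α)
  refine (jd_eq_of_hasDerivAt hL fun a => ?_).trans ?_
  · simp [titeicaLagrangian, div_eq_mul_inv]
  · push_cast; ring

lemma jd_three_titeicaLagrangian (hv : v 0 * v 3 + v 1 * v 4 - v 2 ≠ 0) :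
    jd 3 (titeicaLagrangian α) v
      = 4 * v 2 * (v 5 * v 7 - v 6 ^ 2) / (v 0 * v 3 + v 1 * v 4 - v 2) ^ 5 * v 0 := by
  have hw := hasDerivAt_inv_pow
    (((hasDerivAt_const_mul (v 0)).add_const (v 1 * v 4)).sub_const (v 2)) hv 4
  have hL := (hw.const_mul (v 2 * (v 6 ^ 2 - v 5 * v 7))).sub_const (α * v 2)
  refine (jd_eq_of_hasDerivAt hL fun a => ?_).trans ?_
  · simp [titeicaLagrangian, div_eq_mul_inv]
  · push_cast; ring

lemma jd_four_titeicaLagrangian (hv : v 0 * v 3 + v 1 * v 4 - v 2 ≠ 0) :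
    jd 4 (titeicaLagrangian α) v
      = 4 * v 2 * (v 5 * v 7 - v 6 ^ 2) / (v 0 * v 3 + v 1 * v 4 - v 2) ^ 5 * v 1 := by
  have hw := hasDerivAt_inv_pow
    (((hasDerivAt_const_mul (v 1)).const_add (v 0 * v 3)).sub_const (v 2)) hv 4
  have hL := (hw.const_mul (v 2 * (v 6 ^ 2 - v 5 * v 7))).sub_const (α * v 2)
  refine (jd_eq_of_hasDerivAt hL fun a => ?_).trans ?_
  · simp [titeicaLagrangian, div_eq_mul_inv]
  · push_cast; ring

lemma jd_five_titeicaLagrangian :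
    jd 5 (titeicaLagrangian α) v
      = -(v 2 * ((v 0 * v 3 + v 1 * v 4 - v 2) ^ 4)⁻¹ * v 7) := by
  have hL := ((((hasDerivAt_mul_const (x := v 5) (v 7)).const_sub (v 6 ^ 2)).const_mul
    (v 2)).mul_const ((v 0 * v 3 + v 1 * v 4 - v 2) ^ 4)⁻¹).sub_const (α * v 2)
  refine (jd_eq_of_hasDerivAt hL fun a => ?_).trans ?_
  · simp [titeicaLagrangian, div_eq_mul_inv]
  · ring

lemma jd_six_titeicaLagrangian :
    jd 6 (titeicaLagrangian α) v
      = 2 * (v 2 * ((v 0 * v 3 + v 1 * v 4 - v 2) ^ 4)⁻¹ * v 6) := by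
  have hL := ((((hasDerivAt_pow 2 (v 6)).sub_const (v 5 * v 7)).const_mul (v 2)).mul_const
    ((v 0 * v 3 + v 1 * v 4 - v 2) ^ 4)⁻¹).sub_const (α * v 2)
  refine (jd_eq_of_hasDerivAt hL fun a => ?_).trans ?_
  · simp [titeicaLagrangian, div_eq_mul_inv]
  · push_cast; ring

lemma jd_seven_titeicaLagrangian :
    jd 7 (titeicaLagrangian α) v
      = -(v 2 * ((v 0 * v 3 + v 1 * v 4 - v 2) ^ 4)⁻¹ * v 5) := by
  have hL := ((((hasDerivAt_const_mul (x := v 7) (v 5)).const_sub (v 6 ^ 2)).const_mul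
    (v 2)).mul_const ((v 0 * v 3 + v 1 * v 4 - v 2) ^ 4)⁻¹).sub_const (α * v 2)
  refine (jd_eq_of_hasDerivAt hL fun a => ?_).trans ?_
  · simp [titeicaLagrangian, div_eq_mul_inv]
  · ring

variable {u : ℝ × ℝ → ℝ} {p : ℝ × ℝ} {m n : WithTop ℕ∞}

/-- The factor `φ = u / (x u_x + y u_y - u)⁴` of the Țițeica Lagrangian `-φ det D²u - α u`. -/
noncomputable def titeicaWeight (u : ℝ × ℝ → ℝ) (p : ℝ × ℝ) : ℝ :=
  u p * (legendreTransform u p ^ 4)⁻¹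

lemma contDiffAt_titeicaWeight (hu : ContDiffAt ℝ n u p) (hmn : m + 1 ≤ n)
    (hw : legendreTransform u p ≠ 0) : ContDiffAt ℝ m (titeicaWeight u) p :=
  (hu.of_le (le_self_add.trans hmn)).mul
    (contDiffAt_inv_pow_legendreTransform hu hmn hw 4)

lemma jd_three_jd_four_jet2_titeicaLagrangian (hu : ContDiffAt ℝ 2 u p)
    (hw : legendreTransform u p ≠ 0) :
    (jd 3 (titeicaLagrangian α) (jet2 u p), jd 4 (titeicaLagrangian α) (jet2 u p))
      = (legendreTransform u p ^ 4)⁻¹ • hessCofGrad u u p - hessCofGrad u (titeicaWeight u) p := by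
  have dw := differentiableAt_legendreTransform hu
  have hcof : hessCofGrad u (titeicaWeight u) p
      = u p • -(4 / legendreTransform u p ^ 5) • hessianDet u p • p
        + (legendreTransform u p ^ 4)⁻¹ • hessCofGrad u u p := by
    unfold titeicaWeight
    rw [hessCofGrad_mul (hu.differentiableAt two_ne_zero)
      (differentiableAt_inv_pow_legendreTransform hu hw 4), hessCofGrad_inv_pow dw hw,
      hessCofGrad_legendreTransform hu]
    norm_num
  have hflux : (jd 3 (titeicaLagrangian α) (jet2 u p), jd 4 (titeicaLagrangian α) (jet2 u p))
      = (4 * u p * hessianDet u p / legendreTransform u p ^ 5) • p :=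
    Prod.ext (jd_three_titeicaLagrangian α _ hw) (jd_four_titeicaLagrangian α _ hw)
  rw [hflux, hcof]
  module

lemma first_order_terms_titeicaLagrangian (hu : ContDiffAt ℝ 3 u p)
    (hw : legendreTransform u p ≠ 0) :
    pdx (fun q => jd 3 (titeicaLagrangian α) (jet2 u q)) p
        + pdy (fun q => jd 4 (titeicaLagrangian α) (jet2 u q)) p
      = divergence (fun q => (legendreTransform u q ^ 4)⁻¹ • hessCofGrad u u q) p
        - divergence (hessCofGrad u (titeicaWeight u)) p := by
  have hu₂ : ContDiffAt ℝ 2 u p := hu.of_le (by norm_num)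
  have hw_near : ∀ᶠ q in 𝓝 p, legendreTransform u q ≠ 0 :=
    (differentiableAt_legendreTransform hu₂).continuousAt.eventually_ne hw
  have h_flux := (differentiableAt_inv_pow_legendreTransform hu₂ hw 4).fun_smul
    (differentiableAt_hessCofGrad hu hu₂)
  rw [← divergence_sub h_flux
    (differentiableAt_hessCofGrad hu (contDiffAt_titeicaWeight hu (by norm_num) hw))]
  exact divergence_congr <| ((hu₂.eventually (by simp)).and hw_near).mono fun q hq =>
    jd_three_jd_four_jet2_titeicaLagrangian α hq.1 hq.2

lemma second_order_terms_titeicaLagrangian (hu : ContDiffAt ℝ 4 u p)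
    (hw : legendreTransform u p ≠ 0) :
    pdx (pdx fun q => jd 5 (titeicaLagrangian α) (jet2 u q)) p
        + pdx (pdy fun q => jd 6 (titeicaLagrangian α) (jet2 u q)) p
        + pdy (pdy fun q => jd 7 (titeicaLagrangian α) (jet2 u q)) p
      = -divergence (hessCofGrad u (titeicaWeight u)) p := by
  have h₅ : (fun q => jd 5 (titeicaLagrangian α) (jet2 u q))
      = fun q => -(titeicaWeight u q * pdy (pdy u) q) :=
    funext fun q => jd_five_titeicaLagrangian α (jet2 u q)
  have h₆ : (fun q => jd 6 (titeicaLagrangian α) (jet2 u q))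
      = fun q => 2 * (titeicaWeight u q * pdy (pdx u) q) :=
    funext fun q => jd_six_titeicaLagrangian α (jet2 u q)
  have h₇ : (fun q => jd 7 (titeicaLagrangian α) (jet2 u q))
      = fun q => -(titeicaWeight u q * pdx (pdx u) q) :=
    funext fun q => jd_seven_titeicaLagrangian α (jet2 u q)
  rw [← pdx_pdx_sub_two_mul_pdx_pdy_add_pdy_pdy hu
    (contDiffAt_titeicaWeight hu (by norm_num) hw), h₅, h₆, h₇]
  simp only [pdx_neg, pdy_neg, pdx_const_mul, pdy_const_mul]
  ring

end TiteicaLagrangian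

/-- Theorem 6 of the paper: the second-order Euler–Lagrange expression of the Țițeica
Lagrangian `L = u·(u_xy² − u_xx·u_yy)/(x·u_x + y·u_y − u)⁴ − α·u`, evaluated along any
C⁴ function `u` with `x·u_x + y·u_y − u ≠ 0`, equals
`(u_xx·u_yy − u_xy²)/(x·u_x + y·u_y − u)⁴ − α`. -/
theorem titeica_euler_lagrange (α : ℝ) (D : Set (ℝ × ℝ)) (hD : IsOpen D)
    (u : ℝ × ℝ → ℝ) (hu : ContDiffOn ℝ 4 u D)
    (hw : ∀ p ∈ D, p.1 * pdx u p + p.2 * pdy u p - u p ≠ 0) :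
    ∀ p ∈ D,
      jd 2 (titeicaLagrangian α) (jet2 u p)
        - pdx (fun q => jd 3 (titeicaLagrangian α) (jet2 u q)) p
        - pdy (fun q => jd 4 (titeicaLagrangian α) (jet2 u q)) p
        + pdx (pdx (fun q => jd 5 (titeicaLagrangian α) (jet2 u q))) p
        + pdx (pdy (fun q => jd 6 (titeicaLagrangian α) (jet2 u q))) p
        + pdy (pdy (fun q => jd 7 (titeicaLagrangian α) (jet2 u q))) p
      = (pdx (pdx u) p * pdy (pdy u) p - (pdy (pdx u) p) ^ 2)
          / (p.1 * pdx u p + p.2 * pdy u p - u p) ^ 4 - α := by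
  intro p hp
  have hu₄ : ContDiffAt ℝ 4 u p := hu.contDiffAt (hD.mem_nhds hp)
  have hu₃ : ContDiffAt ℝ 3 u p := hu₄.of_le (by norm_num)
  have hw_p : legendreTransform u p ≠ 0 := hw p hp
  have h_zeroth : jd 2 (titeicaLagrangian α) (jet2 u p)
      = -(hessianDet u p * (1 / legendreTransform u p ^ 4 + 4 * u p / legendreTransform u p ^ 5))
        - α :=
    jd_two_titeicaLagrangian α (jet2 u p) hw_p
  have h_first := first_order_terms_titeicaLagrangian α hu₃ hw_p
  have h_second := second_order_terms_titeicaLagrangian α hu₄ hw_p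
  have h_div := divergence_inv_pow_legendreTransform_smul hu₃ hw_p 4
  push_cast at h_div
  change _ = hessianDet u p / legendreTransform u p ^ 4 - α
  linear_combination h_zeroth - h_first + h_second - h_div
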